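/- Let g : ℝ → ℝ be a probability density function (g ≥ 0 and ∫ g = 1) that is symmetric about 0 (g(−x) = g(x) for all x), nondecreasing on (−∞, 0], and convex on (−∞, 0]. Let σ > 0 and μ ≥ 0 satisfy μ² + σ² ≤ 1. Then for every real number c, ∫_{−|c|}^{|c|} (1 − x²) · σ⁻¹ g(x/σ) dx ≥ ∫_{−|c|}^{|c|} (1 − x²) · σ⁻¹ g((x − μ)/σ) dx. In words: against any realization c of the opponent, a player's ex post expected payoff in the bias-variance game from the centered distribution σZ is at least that from the shifted distribution σZ + μ. -/

import Mathlib

open MeasureTheory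

/-!
Let `f` be the density of `σZ` and `w` the payoff `1 - x²` cut off outside `[-|c|, |c|]`, and
compare `∫ w(x) f(x - μ)` with `∫ w(x) f(x)`.

Both `w⁺` and `f` are even and decrease with `|x|`, so reflecting about `μ / 2` and applying the
rearrangement inequality to the pairs `x, μ - x` shows that the shift lowers the integral against
`w⁺`. Since `w⁻` is even, the integral of `f(x - μ)` against it equals the integral of
`(f(x - μ) + f(x + μ)) / 2`. Individual rationality gives `μ ≤ 1`, while `w⁻` vanishes for
`|x| ≤ 1`, so `x - μ` and `x + μ` lie on the same side of `0` wherever `w⁻` does not vanish, and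
there convexity makes that average at least `f x`: the shift raises the integral against `w⁻`.
-/

section Even

variable {α β γ : Type*} [AddCommGroup α] [LinearOrder α] [IsOrderedAddMonoid α]
  [Preorder β] [Preorder γ] {f : α → β} {g : α → γ}

lemma apply_le_apply_of_even_of_abs_le_abs (hf : f.Even) (hmono : MonotoneOn f (Set.Iic 0))
    {x y : α} (hxy : |x| ≤ |y|) : f y ≤ f x := by
  have apply_neg_abs (z : α) : f (-|z|) = f z := by
    rcases abs_choice z with hz | hz <;> simp [hz, hf z]
  rw [← apply_neg_abs x, ← apply_neg_abs y]
  exact hmono (by simp) (by simp) (neg_le_neg hxy)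

lemma monovary_of_even_of_monotoneOn_Iic (hf : f.Even) (hf_mono : MonotoneOn f (Set.Iic 0))
    (hg : g.Even) (hg_mono : MonotoneOn g (Set.Iic 0)) : Monovary f g := fun _ _ hlt ↦
  apply_le_apply_of_even_of_abs_le_abs hf hf_mono <| le_of_not_ge fun habs ↦
    hlt.not_ge (apply_le_apply_of_even_of_abs_le_abs hg hg_mono habs)

end Even

section Convex

lemma two_mul_apply_le_of_convexOn {E : Type*} [AddCommGroup E] [Module ℝ E] {s : Set E}
    {f : E → ℝ} (hf : ConvexOn ℝ s f) {x d : E} (hsub : x - d ∈ s) (hadd : x + d ∈ s) :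
    2 * f x ≤ f (x - d) + f (x + d) := by
  have hmid := hf.2 hsub hadd one_half_pos.le one_half_pos.le (add_halves (1 : ℝ))
  rw [show (1 / 2 : ℝ) • (x - d) + (1 / 2 : ℝ) • (x + d) = x by module] at hmid
  simp only [smul_eq_mul] at hmid
  linarith

lemma two_mul_apply_le_of_even_of_convexOn_Iic {f : ℝ → ℝ} (hf : f.Even)
    (hconv : ConvexOn ℝ (Set.Iic 0) f) {x d : ℝ} (hd : |d| ≤ |x|) :
    2 * f x ≤ f (x - d) + f (x + d) := by
  have of_nonpos {y : ℝ} (hy : y ≤ 0) (hdy : |d| ≤ |y|) : 2 * f y ≤ f (y - d) + f (y + d) := by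
    rw [abs_of_nonpos hy, abs_le] at hdy
    exact two_mul_apply_le_of_convexOn hconv (Set.mem_Iic.2 (by linarith))
      (Set.mem_Iic.2 (by linarith))
  rcases le_total x 0 with hx | hx
  · exact of_nonpos hx hd
  · calc 2 * f x = 2 * f (-x) := by rw [hf]
      _ ≤ f (-x - d) + f (-x + d) := of_nonpos (neg_nonpos.2 hx) (by rwa [abs_neg])
      _ = f (x - d) + f (x + d) := by
        rw [← hf (x - d), ← hf (x + d), neg_sub', sub_neg_eq_add, neg_add', add_comm]

end Convex

section Integral

lemma integral_mul_comp_le_of_monovary {α : Type*} [MeasurableSpace α] {ν : Measure α}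
    {τ : α ≃ᵐ α} (hτ : MeasurePreserving τ ν ν) (hτ_inv : Function.Involutive τ) {p f : α → ℝ}
    (hpf : Monovary p f) (hint : Integrable (fun x ↦ p x * f x) ν)
    (hint_comp : Integrable (fun x ↦ p x * f (τ x)) ν) :
    ∫ x, p x * f (τ x) ∂ν ≤ ∫ x, p x * f x ∂ν := by
  have hint' : Integrable (fun x ↦ p (τ x) * f (τ x)) ν :=
    (hτ.integrable_comp_emb τ.measurableEmbedding).2 hint
  have hint_comp' : Integrable (fun x ↦ p (τ x) * f x) ν := by
    simpa only [Function.comp_def, hτ_inv _] using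
      (hτ.integrable_comp_emb τ.measurableEmbedding).2 hint_comp
  have integral_comp : ∫ x, p (τ x) * f (τ x) ∂ν = ∫ x, p x * f x ∂ν :=
    hτ.integral_comp' fun x ↦ p x * f x
  have integral_swap : ∫ x, p (τ x) * f x ∂ν = ∫ x, p x * f (τ x) ∂ν := by
    simpa only [hτ_inv _] using hτ.integral_comp' fun x ↦ p x * f (τ x)
  have rearrangement : ∫ x, (p x * f (τ x) + p (τ x) * f x) ∂ν ≤
      ∫ x, (p x * f x + p (τ x) * f (τ x)) ∂ν :=
    integral_mono (hint_comp.add hint_comp') (hint.add hint') fun x ↦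
      monovary_iff_mul_rearrangement.1 hpf x (τ x)
  rw [integral_add hint_comp hint_comp', integral_add hint hint', integral_comp,
    integral_swap] at rearrangement
  linarith

variable {G : Type*} [AddCommGroup G] [MeasurableSpace G] [MeasurableNeg G]
  {ν : Measure G} [ν.IsNegInvariant] {f : G → ℝ} {a : G}

lemma integral_mul_le_integral_mul_comp_sub {q : G → ℝ} (hf : f.Even) (hq : q.Even)
    (hq_nonneg : 0 ≤ q) (hmid : ∀ x, 0 < q x → 2 * f x ≤ f (x - a) + f (x + a))
    (hint : Integrable (fun x ↦ q x * f x) ν)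
    (hint_sub : Integrable (fun x ↦ q x * f (x - a)) ν) :
    ∫ x, q x * f x ∂ν ≤ ∫ x, q x * f (x - a) ∂ν := by
  have comp_neg (x : G) : q (-x) * f (-x - a) = q x * f (x + a) := by
    rw [hq, ← hf (x + a), neg_add']
  have hint_add : Integrable (fun x ↦ q x * f (x + a)) ν := by
    simpa only [comp_neg] using hint_sub.comp_neg
  have integral_add_eq : ∫ x, q x * f (x + a) ∂ν = ∫ x, q x * f (x - a) ∂ν := by
    simpa only [comp_neg] using integral_neg_eq_self (fun x ↦ q x * f (x - a)) ν
  have symmetrized : ∫ x, 2 * (q x * f x) ∂ν ≤ ∫ x, (q x * f (x - a) + q x * f (x + a)) ∂ν := by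
    refine integral_mono (hint.const_mul 2) (hint_sub.add hint_add) fun x ↦ ?_
    rcases (hq_nonneg x).eq_or_lt with hx | hx
    · simp [← hx]
    · linarith [mul_le_mul_of_nonneg_left (hmid x hx) hx.le]
  rw [integral_const_mul, integral_add hint_sub hint_add, integral_add_eq] at symmetrized
  linarith

variable [MeasurableAdd G] [ν.IsAddLeftInvariant]

lemma integral_mul_comp_sub_le_of_monovary {p : G → ℝ} (hf : f.Even) (hpf : Monovary p f)
    (hint : Integrable (fun x ↦ p x * f x) ν)
    (hint_sub : Integrable (fun x ↦ p x * f (x - a)) ν) :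
    ∫ x, p x * f (x - a) ∂ν ≤ ∫ x, p x * f x ∂ν := by
  have reflect (x : G) : f (x - a) = f (a - x) := by rw [← hf (x - a), neg_sub]
  simp only [reflect] at hint_sub ⊢
  exact integral_mul_comp_le_of_monovary (τ := MeasurableEquiv.subLeft a)
    (Measure.measurePreserving_sub_left ν a) (sub_sub_cancel a) hpf hint hint_sub

lemma integral_mul_comp_sub_le {w : G → ℝ} {B : ℝ} (hf : f.Even) (hf_int : Integrable f ν)
    (hw : w.Even) (hw_meas : Measurable w) (hw_bdd : ∀ x, |w x| ≤ B)
    (hpos : Monovary w⁺ f) (hneg : ∀ x, w x < 0 → 2 * f x ≤ f (x - a) + f (x + a)) :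
    ∫ x, w x * f (x - a) ∂ν ≤ ∫ x, w x * f x ∂ν := by
  have hf_int_sub : Integrable (fun x ↦ f (x - a)) ν := hf_int.comp_sub_right a
  have integrable_posPart {k : G → ℝ} (hk : Integrable k ν) :
      Integrable (fun x ↦ w⁺ x * k x) ν :=
    hk.bdd_mul (hw_meas.sup_const 0).aestronglyMeasurable <| .of_forall fun x ↦
      calc ‖(w x)⁺‖ = (w x)⁺ := Real.norm_of_nonneg (posPart_nonneg (w x))
        _ ≤ |w x| := sup_le (le_abs_self (w x)) (abs_nonneg (w x))
        _ ≤ B := hw_bdd x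
  have integrable_negPart {k : G → ℝ} (hk : Integrable k ν) :
      Integrable (fun x ↦ w⁻ x * k x) ν :=
    hk.bdd_mul (hw_meas.neg.sup_const 0).aestronglyMeasurable <| .of_forall fun x ↦
      calc ‖(w x)⁻‖ = (w x)⁻ := Real.norm_of_nonneg (negPart_nonneg (w x))
        _ ≤ |w x| := sup_le (neg_le_abs (w x)) (abs_nonneg (w x))
        _ ≤ B := hw_bdd x
  have integral_split {k : G → ℝ} (hk : Integrable k ν) :
      ∫ x, w x * k x ∂ν = ∫ x, w⁺ x * k x ∂ν - ∫ x, w⁻ x * k x ∂ν := by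
    rw [← integral_sub (integrable_posPart hk) (integrable_negPart hk)]
    refine integral_congr_ae (.of_forall fun x ↦ ?_)
    simp only [Pi.posPart_apply, Pi.negPart_apply, ← sub_mul, posPart_sub_negPart]
  rw [integral_split hf_int, integral_split hf_int_sub]
  refine sub_le_sub ?_ ?_
  · exact integral_mul_comp_sub_le_of_monovary hf hpos (integrable_posPart hf_int)
      (integrable_posPart hf_int_sub)
  · have hw_neg : (w⁻).Even := hw.left_comp (·⁻)
    refine integral_mul_le_integral_mul_comp_sub hf hw_neg (negPart_nonneg w)
      (fun x hx ↦ hneg x ?_) (integrable_negPart hf_int) (integrable_negPart hf_int_sub)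
    simpa using hx

end Integral

section WinPayoff

/-- The payoff of a player who realizes `x` against an opponent realizing `c`, as a function of `x`:
`1 - x²` for a win and `0` for a loss. A tie is counted as a win, which changes the function only
on a null set. -/
noncomputable def winPayoff (c : ℝ) : ℝ → ℝ :=
  (Set.Icc (-|c|) |c|).indicator fun x ↦ 1 - x ^ 2

variable (c : ℝ)

lemma integral_winPayoff_mul (f : ℝ → ℝ) :
    ∫ x, winPayoff c x * f x = ∫ x in (-|c|)..|c|, (1 - x ^ 2) * f x := by
  rw [intervalIntegral.integral_of_le (neg_le_self (abs_nonneg c)),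
    ← integral_Icc_eq_integral_Ioc, ← integral_indicator measurableSet_Icc]
  simp only [winPayoff, Set.indicator_mul_left]

lemma measurable_winPayoff : Measurable (winPayoff c) :=
  Measurable.indicator (by fun_prop) measurableSet_Icc

lemma even_winPayoff : (winPayoff c).Even := fun x ↦ by
  simp only [winPayoff, Set.indicator_apply, Set.mem_Icc, ← abs_le, abs_neg, neg_sq]

lemma abs_winPayoff_le (x : ℝ) : |winPayoff c x| ≤ 1 + c ^ 2 := by
  rw [winPayoff, Set.indicator_apply]
  split_ifs with hx
  · have hxc : x ^ 2 ≤ c ^ 2 := sq_le_sq.2 (abs_le.2 hx)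
    exact abs_le.2 ⟨by linarith, by linarith [sq_nonneg x, sq_nonneg c]⟩
  · rw [abs_zero]
    positivity

lemma monotoneOn_posPart_winPayoff : MonotoneOn (winPayoff c)⁺ (Set.Iic 0) := by
  intro x _ y hy hxy
  simp only [Pi.posPart_apply]
  by_cases hx : x ∈ Set.Icc (-|c|) |c|
  · have hy' : y ∈ Set.Icc (-|c|) |c| := ⟨hx.1.trans hxy, hy.trans (abs_nonneg c)⟩
    rw [winPayoff, Set.indicator_of_mem hx, Set.indicator_of_mem hy']
    have hsq : y ^ 2 ≤ x ^ 2 := sq_le_sq.2 (abs_le_abs_of_nonpos hy hxy)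
    exact posPart_mono (sub_le_sub_left hsq 1)
  · rw [winPayoff, Set.indicator_of_notMem hx, posPart_zero]
    exact posPart_nonneg _

variable {c}

lemma one_lt_abs_of_winPayoff_neg {x : ℝ} (hx : winPayoff c x < 0) : 1 < |x| := by
  contrapose! hx
  exact Set.indicator_apply_nonneg fun _ ↦ sub_nonneg.2 ((sq_le_one_iff_abs_le_one x).2 hx)

end WinPayoff

section ScaleDensity

/-- The density of `σ Z` when `Z` has density `g` and `0 < σ`. -/
noncomputable def scaleDensity (σ : ℝ) (g : ℝ → ℝ) (x : ℝ) : ℝ := σ⁻¹ * g (x / σ)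

variable {g : ℝ → ℝ} {σ : ℝ}

lemma integrable_scaleDensity (hg : Integrable g) (hσ : σ ≠ 0) : Integrable (scaleDensity σ g) :=
  (hg.comp_div hσ).const_mul σ⁻¹

lemma even_scaleDensity (hg : g.Even) : (scaleDensity σ g).Even := fun x ↦ by
  simp only [scaleDensity, neg_div, hg (x / σ)]

lemma monotoneOn_scaleDensity (hg : MonotoneOn g (Set.Iic 0)) (hσ : 0 ≤ σ) :
    MonotoneOn (scaleDensity σ g) (Set.Iic 0) := fun _ hx _ hy hxy ↦
  mul_le_mul_of_nonneg_left
    (hg (div_nonpos_of_nonpos_of_nonneg hx hσ) (div_nonpos_of_nonpos_of_nonneg hy hσ)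
      (div_le_div_of_nonneg_right hxy hσ))
    (inv_nonneg.2 hσ)

lemma convexOn_scaleDensity (hg : ConvexOn ℝ (Set.Iic 0) g) (hσ : 0 ≤ σ) :
    ConvexOn ℝ (Set.Iic 0) (scaleDensity σ g) := by
  have hcomp : ConvexOn ℝ (Set.Iic 0) fun x ↦ g (x / σ) := by
    refine (hg.comp_linearMap (LinearMap.mulRight ℝ σ⁻¹)).subset (fun x hx ↦ ?_) (convex_Iic 0)
    exact mul_nonpos_of_nonpos_of_nonneg hx (inv_nonneg.2 hσ)
  exact hcomp.smul (inv_nonneg.2 hσ)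

end ScaleDensity

theorem lower_bias_beneficial_fixed_variance_general
    {g : ℝ → ℝ} (hg_int : Integrable g) (hg_symm : g.Even)
    (hg_mono : MonotoneOn g (Set.Iic 0)) (hg_convex : ConvexOn ℝ (Set.Iic 0) g)
    {σ μ : ℝ} (hσ : 0 < σ) (hμ : |μ| ≤ 1) (c : ℝ) :
    ∫ x in (-|c|)..|c|, (1 - x ^ 2) * (σ⁻¹ * g ((x - μ) / σ))
      ≤ ∫ x in (-|c|)..|c|, (1 - x ^ 2) * (σ⁻¹ * g (x / σ)) := by
  have hf : (scaleDensity σ g).Even := even_scaleDensity hg_symm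
  have hw : ((winPayoff c)⁺).Even := (even_winPayoff c).left_comp (·⁺)
  have hmonovary : Monovary (winPayoff c)⁺ (scaleDensity σ g) :=
    monovary_of_even_of_monotoneOn_Iic hw (monotoneOn_posPart_winPayoff c) hf
      (monotoneOn_scaleDensity hg_mono hσ.le)
  have hmid (x : ℝ) (hx : winPayoff c x < 0) :
      2 * scaleDensity σ g x ≤ scaleDensity σ g (x - μ) + scaleDensity σ g (x + μ) :=
    two_mul_apply_le_of_even_of_convexOn_Iic hf (convexOn_scaleDensity hg_convex hσ.le)
      (hμ.trans (one_lt_abs_of_winPayoff_neg hx).le)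
  have hshift := integral_mul_comp_sub_le hf (integrable_scaleDensity hg_int hσ.ne')
    (even_winPayoff c) (measurable_winPayoff c) (abs_winPayoff_le c) hmonovary hmid
  simpa only [integral_winPayoff_mul, integral_winPayoff_mul c fun x ↦ scaleDensity σ g (x - μ),
    scaleDensity] using hshift

theorem lower_bias_beneficial_fixed_variance
    (g : ℝ → ℝ) (hg_nonneg : ∀ x, 0 ≤ g x) (hg_int : ∫ x, g x = 1)
    (hg_symm : ∀ x, g (-x) = g x)
    (hg_mono : MonotoneOn g (Set.Iic 0))
    (hg_convex : ConvexOn ℝ (Set.Iic 0) g)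
    (σ μ : ℝ) (hσ : 0 < σ) (hμ : 0 ≤ μ) (hIR : μ^2 + σ^2 ≤ 1) (c : ℝ) :
    ∫ x in (-|c|)..|c|, (1 - x^2) * (σ⁻¹ * g (x / σ))
      ≥ ∫ x in (-|c|)..|c|, (1 - x^2) * (σ⁻¹ * g ((x - μ) / σ)) :=
  lower_bias_beneficial_fixed_variance_general
    (.of_integral_ne_zero (hg_int ▸ one_ne_zero)) hg_symm hg_mono hg_convex hσ
    ((sq_le_one_iff_abs_le_one μ).1 (by linarith [sq_nonneg σ])) c
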